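/- arXiv:1503.00345 — 2 statements merged into one kernel-verified Lean document; each statement's English description precedes it below -/
import Mathlib

section
/- Let X be a nonnegative random variable with E[X] < ∞, M_X := essSup X < ∞, and V_X := Var(√X) > 0. Set F_X := E[(√M_X − √X)²], m_X := essInf X, and E_X := E[(√X − √m_X)²]. Then E_X ≥ F_X·V_X/(F_X − V_X). -/
open MeasureTheory ProbabilityTheory Real

/-!
Let `Y` take values in `[a, b]`, and put `V = Var Y`, `E = 𝔼[(Y - a)²]`, `F = 𝔼[(b - Y)²]`. Then
`E - V = (𝔼 Y - a)²` and `F - V = (b - 𝔼 Y)²`, so squaring the Bhatia–Davis inequality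
`V ≤ (b - 𝔼 Y) (𝔼 Y - a)` gives `V² ≤ (E - V) (F - V)`, that is, `F V ≤ E (F - V)`.
The theorem is the case `Y = √X`, `a = √(essInf X)`, `b = √(essSup X)`.
-/

section EssentialBounds

open Filter Set

variable {α β : Type*} [MeasurableSpace α] {μ : Measure α} [ConditionallyCompleteLinearOrder β]
  [TopologicalSpace β] [FirstCountableTopology β] [OrderTopology β] {f : α → β}

theorem ae_mem_Icc_essInf_essSup (hf_ge : IsBoundedUnder (· ≥ ·) (ae μ) f)
    (hf_le : IsBoundedUnder (· ≤ ·) (ae μ) f) :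
    ∀ᵐ x ∂μ, f x ∈ Icc (essInf f μ) (essSup f μ) :=
  (ae_essInf_le hf_ge).and (ae_le_essSup hf_le)

end EssentialBounds

section BoundedVariable

open Set

variable {Ω : Type*} [MeasurableSpace Ω] {μ : Measure Ω} [IsProbabilityMeasure μ]
  {Y : Ω → ℝ} {a b : ℝ}

theorem integral_sub_const_sq_eq_variance_add_sq (hY : MemLp Y 2 μ) (c : ℝ) :
    ∫ ω, (Y ω - c) ^ 2 ∂μ = Var[Y; μ] + (μ[Y] - c) ^ 2 := by
  have hmean : ∫ ω, (Y ω - c) ∂μ = μ[Y] - c := by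
    rw [integral_sub (hY.integrable one_le_two) (integrable_const c), integral_const,
      probReal_univ, one_smul]
  have hvar : Var[Y; μ] = ∫ ω, (Y ω - c) ^ 2 ∂μ - (∫ ω, (Y ω - c) ∂μ) ^ 2 := by
    rw [← variance_sub_const hY.aestronglyMeasurable c]
    exact variance_eq_sub (hY.sub (memLp_const c))
  rw [hvar, hmean, sub_add_cancel]

theorem integral_const_sub_sq_eq_variance_add_sq (hY : MemLp Y 2 μ) (c : ℝ) :
    ∫ ω, (c - Y ω) ^ 2 ∂μ = Var[Y; μ] + (c - μ[Y]) ^ 2 := by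
  simp_rw [sub_sq_comm c]
  exact integral_sub_const_sq_eq_variance_add_sq hY c

theorem variance_lt_integral_const_sub_sq (hY : ∀ᵐ ω ∂μ, Y ω ∈ Icc a b) (hYm : AEMeasurable Y μ)
    (hV : 0 < Var[Y; μ]) : Var[Y; μ] < ∫ ω, (b - Y ω) ^ 2 ∂μ := by
  have hb : b - μ[Y] ≠ 0 :=
    left_ne_zero_of_mul (hV.trans_le (variance_le_sub_mul_sub hY hYm)).ne'
  rw [integral_const_sub_sq_eq_variance_add_sq (memLp_of_bounded hY hYm.aestronglyMeasurable 2)]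
  exact lt_add_of_pos_right _ (sq_pos_of_ne_zero hb)

theorem variance_sq_le_mul_of_ae_mem_Icc (hY : ∀ᵐ ω ∂μ, Y ω ∈ Icc a b) (hYm : AEMeasurable Y μ) :
    Var[Y; μ] ^ 2 ≤
      (∫ ω, (Y ω - a) ^ 2 ∂μ - Var[Y; μ]) * (∫ ω, (b - Y ω) ^ 2 ∂μ - Var[Y; μ]) := by
  have hY2 : MemLp Y 2 μ := memLp_of_bounded hY hYm.aestronglyMeasurable 2
  calc
    Var[Y; μ] ^ 2 ≤ ((b - μ[Y]) * (μ[Y] - a)) ^ 2 :=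
      pow_le_pow_left₀ (variance_nonneg Y μ) (variance_le_sub_mul_sub hY hYm) 2
    _ = (∫ ω, (Y ω - a) ^ 2 ∂μ - Var[Y; μ]) * (∫ ω, (b - Y ω) ^ 2 ∂μ - Var[Y; μ]) := by
      rw [integral_sub_const_sq_eq_variance_add_sq hY2,
        integral_const_sub_sq_eq_variance_add_sq hY2]
      ring

theorem E_ge_FV_div_F_sub_V_general (hY : ∀ᵐ ω ∂μ, Y ω ∈ Icc a b) (hYm : AEMeasurable Y μ)
    (hV : 0 < Var[Y; μ]) :
    ∫ ω, (Y ω - a) ^ 2 ∂μ ≥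
      (∫ ω, (b - Y ω) ^ 2 ∂μ) * Var[Y; μ] / (∫ ω, (b - Y ω) ^ 2 ∂μ - Var[Y; μ]) := by
  rw [ge_iff_le, div_le_iff₀ (sub_pos.2 (variance_lt_integral_const_sub_sq hY hYm hV))]
  linarith [variance_sq_le_mul_of_ae_mem_Icc hY hYm]

end BoundedVariable

/-- Proposition 2 (lower bound for `E_X`): if `M_X = essSup X < ∞` and
`V_X = Var √X > 0`, then `E_X ≥ F_X V_X / (F_X - V_X)`, where
`E_X = E (√X - √(essInf X))²` and `F_X = E (√(essSup X) - √X)²`. -/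
theorem E_ge_FV_div_F_sub_V {Ω : Type*} [MeasurableSpace Ω] {μ : Measure Ω}
    [IsProbabilityMeasure μ] (X : Ω → ℝ) (hXm : Measurable X)
    (hXnn : ∀ᵐ ω ∂μ, 0 ≤ X ω) (hXint : Integrable X μ)
    (hbdd : ∃ C : ℝ, ∀ᵐ ω ∂μ, X ω ≤ C)
    (V E F : ℝ) (hVdef : V = variance (fun ω => Real.sqrt (X ω)) μ)
    (hEdef : E = ∫ ω, (Real.sqrt (X ω) - Real.sqrt (essInf X μ)) ^ 2 ∂μ)
    (hFdef : F = ∫ ω, (Real.sqrt (essSup X μ) - Real.sqrt (X ω)) ^ 2 ∂μ)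
    (hV : 0 < V) :
    E ≥ F * V / (F - V) := by
  subst hVdef hEdef hFdef
  obtain ⟨C, hXC⟩ := hbdd
  have hX_mem := ae_mem_Icc_essInf_essSup (Filter.isBoundedUnder_of_eventually_ge hXnn)
    (Filter.isBoundedUnder_of_eventually_le hXC)
  have hsqrt_mem := hX_mem.mono fun _ h ↦ Real.sqrt_monotone.mapsTo_Icc h
  exact E_ge_FV_div_F_sub_V_general hsqrt_mem hXm.sqrt.aemeasurable hV
end

section
/- For every real V > 0 and every ε ∈ (0,1), there exists a nonnegative random variable X with E[X] < ∞ such that Var(√X) = V, essSup X = ∞, and E[(√X − √m_X)²] = (1 + ε)·V, where m_X := essInf X. Consequently, inf{E[(√X − √m_X)²] : X nonnegative, E[X] < ∞, Var(√X) = V, essSup X = ∞} = V. -/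
open MeasureTheory ProbabilityTheory Real
open scoped NNReal

/-!
For a constant `c`, `E (Y - c)² = Var Y + (E Y - c)²`. With `Y = √X` and `c = √(essInf X)` the last
term is positive because `c ≤ Y` almost surely and `Y` is not almost surely constant, so every value
is larger than `V`. Conversely, a Poisson variable `N` of rate `r` has `E N = Var N = r`,
`essInf N = 0` and `essSup N = ∞`; hence `X = (V / r) N²` has `Var √X = V` and
`E X = (1 + r) V`, and every number larger than `V` is of this form.
-/

section ConstantBelow

variable {Ω : Type*} {mΩ : MeasurableSpace Ω} {μ : Measure Ω} [IsProbabilityMeasure μ]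
  {X Y : Ω → ℝ} {c : ℝ}

lemma integral_sub_const_sq_eq_variance_add (hY : MemLp Y 2 μ) (c : ℝ) :
    ∫ ω, (Y ω - c) ^ 2 ∂μ = variance Y μ + (∫ ω, Y ω ∂μ - c) ^ 2 := by
  have h := variance_eq_sub (hY.sub (memLp_const c))
  simp only [Pi.pow_apply, Pi.sub_apply] at h
  rw [integral_sub (hY.integrable one_le_two) (integrable_const c), integral_const,
    probReal_univ, one_smul] at h
  rw [← variance_sub_const hY.aestronglyMeasurable c]
  exact eq_add_of_sub_eq h.symm

lemma variance_lt_integral_sub_const_sq (hY : MemLp Y 2 μ) (hle : ∀ᵐ ω ∂μ, c ≤ Y ω)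
    (hne : ¬ ∀ᵐ ω ∂μ, Y ω = c) : variance Y μ < ∫ ω, (Y ω - c) ^ 2 ∂μ := by
  have hmean : ∫ ω, Y ω ∂μ - c ≠ 0 := by
    contrapose! hne
    have heq : ∫ _, c ∂μ = ∫ ω, Y ω ∂μ := by simpa using (sub_eq_zero.1 hne).symm
    filter_upwards [(integral_eq_iff_of_ae_le (integrable_const c)
      (hY.integrable one_le_two) hle).1 heq] with ω hω using hω.symm
  rw [integral_sub_const_sq_eq_variance_add hY]
  exact lt_add_of_pos_right _ (sq_pos_of_ne_zero hmean)

lemma variance_sqrt_lt_integral_sub_sqrt_essInf_sq (hX : Integrable X μ)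
    (hnonneg : ∀ᵐ ω ∂μ, 0 ≤ X ω) (hunbdd : ¬ ∃ C : ℝ, ∀ᵐ ω ∂μ, X ω ≤ C) :
    variance (fun ω => √(X ω)) μ < ∫ ω, (√(X ω) - √(essInf X μ)) ^ 2 ∂μ := by
  have hmem : MemLp (fun ω => √(X ω)) 2 μ := by
    rw [memLp_two_iff_integrable_sq hX.aestronglyMeasurable.aemeasurable.sqrt.aestronglyMeasurable]
    exact hX.congr (hnonneg.mono fun ω hω => (sq_sqrt hω).symm)
  refine variance_lt_integral_sub_const_sq hmem ?_ fun hconst => hunbdd ⟨√(essInf X μ) ^ 2, ?_⟩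
  · filter_upwards [ae_essInf_le (Filter.isBoundedUnder_of_eventually_ge hnonneg)] with ω hω
    exact sqrt_le_sqrt hω
  · filter_upwards [hnonneg, hconst] with ω hω heq
    rw [← heq, sq_sqrt hω]

end ConstantBelow

section Poisson

variable {r : ℝ≥0}

lemma poissonMeasure_singleton_ne_zero (hr : 0 < r) (n : ℕ) : poissonMeasure r {n} ≠ 0 :=
  (measureReal_ne_zero_iff).1 (poissonMeasure_real_singleton_pos n hr).ne'

lemma ae_poissonMeasure_iff (hr : 0 < r) {p : ℕ → Prop} :
    (∀ᵐ n ∂poissonMeasure r, p n) ↔ ∀ n, p n := by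
  rw [ae_eq_top.2 (poissonMeasure_singleton_ne_zero hr), Filter.eventually_top]

lemma essInf_poissonMeasure_of_monotone {α : Type*} [ConditionallyCompleteLattice α]
    (hr : 0 < r) {f : ℕ → α} (hf : Monotone f) : essInf f (poissonMeasure r) = f 0 := by
  have hleast : IsLeast (Set.range f) (f 0) :=
    ⟨⟨0, rfl⟩, Set.forall_mem_range.2 fun n => hf n.zero_le⟩
  rw [essInf_eq_ciInf (poissonMeasure_singleton_ne_zero hr) hleast.bddBelow]
  exact hleast.csInf_eq

section SizeBias

variable {E : Type*} [NormedAddCommGroup E] [NormedSpace ℝ E] {f : ℕ → E}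

lemma poisson_weight_succ_mul (r : ℝ) (n : ℕ) :
    exp (-r) * r ^ (n + 1) / (n + 1).factorial * (n + 1 : ℕ) =
      r * (exp (-r) * r ^ n / n.factorial) := by
  rw [Nat.factorial_succ]
  push_cast
  field_simp
  ring

lemma integrable_natCast_smul_poissonMeasure
    (hf : Integrable (fun n => f (n + 1)) (poissonMeasure r)) :
    Integrable (fun n : ℕ => (n : ℝ) • f n) (poissonMeasure r) := by
  rw [integrable_poissonMeasure_iff] at hf ⊢
  rw [← summable_nat_add_iff 1]
  refine (hf.mul_left (r : ℝ)).congr fun n => ?_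
  rw [norm_smul, norm_natCast, ← mul_assoc, ← mul_assoc, poisson_weight_succ_mul]

lemma integral_natCast_smul_poissonMeasure [CompleteSpace E]
    (hf : Integrable (fun n => f (n + 1)) (poissonMeasure r)) :
    ∫ n : ℕ, (n : ℝ) • f n ∂poissonMeasure r = (r : ℝ) • ∫ n, f (n + 1) ∂poissonMeasure r := by
  have hsum := hasSum_integral_poissonMeasure (integrable_natCast_smul_poissonMeasure hf)
  rw [← hasSum_nat_add_iff' 1] at hsum
  simp only [smul_smul, poisson_weight_succ_mul, Finset.range_one, Finset.sum_singleton,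
    Nat.cast_zero, mul_zero, zero_smul, sub_zero] at hsum
  refine hsum.unique ?_
  simpa only [smul_smul] using (hasSum_integral_poissonMeasure hf).const_smul (r : ℝ)

end SizeBias

lemma integrable_natCast_poissonMeasure (r : ℝ≥0) :
    Integrable (fun n : ℕ => (n : ℝ)) (poissonMeasure r) := by
  simpa using integrable_natCast_smul_poissonMeasure (f := fun _ => (1 : ℝ)) (integrable_const 1)

lemma integral_natCast_poissonMeasure (r : ℝ≥0) : ∫ n : ℕ, (n : ℝ) ∂poissonMeasure r = r := by
  simpa using integral_natCast_smul_poissonMeasure (f := fun _ => (1 : ℝ)) (integrable_const 1)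

lemma integrable_natCast_succ_poissonMeasure (r : ℝ≥0) :
    Integrable (fun n : ℕ => ((n + 1 : ℕ) : ℝ)) (poissonMeasure r) := by
  simpa using (integrable_natCast_poissonMeasure r).add (integrable_const (1 : ℝ))

lemma integrable_natCast_sq_poissonMeasure (r : ℝ≥0) :
    Integrable (fun n : ℕ => (n : ℝ) ^ 2) (poissonMeasure r) := by
  simpa only [smul_eq_mul, ← sq] using
    integrable_natCast_smul_poissonMeasure (integrable_natCast_succ_poissonMeasure r)

lemma integral_natCast_sq_poissonMeasure (r : ℝ≥0) :
    ∫ n : ℕ, (n : ℝ) ^ 2 ∂poissonMeasure r = r * (r + 1) := by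
  calc ∫ n : ℕ, (n : ℝ) ^ 2 ∂poissonMeasure r
      = r * ∫ n : ℕ, ((n + 1 : ℕ) : ℝ) ∂poissonMeasure r := by
        simpa only [smul_eq_mul, ← sq] using
          integral_natCast_smul_poissonMeasure (integrable_natCast_succ_poissonMeasure r)
    _ = r * (r + 1) := by
        push_cast
        rw [integral_add (integrable_natCast_poissonMeasure r) (integrable_const 1),
          integral_natCast_poissonMeasure, integral_const, probReal_univ, one_smul]

lemma variance_natCast_poissonMeasure (r : ℝ≥0) :
    variance (fun n : ℕ => (n : ℝ)) (poissonMeasure r) = r := by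
  have hmem : MemLp (fun n : ℕ => (n : ℝ)) 2 (poissonMeasure r) :=
    (memLp_two_iff_integrable_sq Measurable.of_discrete.aestronglyMeasurable).2
      (integrable_natCast_sq_poissonMeasure r)
  rw [variance_eq_sub hmem]
  simp only [Pi.pow_apply]
  rw [integral_natCast_sq_poissonMeasure, integral_natCast_poissonMeasure]
  ring

end Poisson

section ScaledSquare

variable {c : ℝ} {r : ℝ≥0}

lemma sqrt_const_mul_natCast_sq (hc : 0 ≤ c) (n : ℕ) : √(c * (n : ℝ) ^ 2) = √c * n := by
  rw [sqrt_mul hc, sqrt_sq n.cast_nonneg]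

lemma variance_sqrt_const_mul_sq_poissonMeasure (hc : 0 ≤ c) (r : ℝ≥0) :
    variance (fun n : ℕ => √(c * (n : ℝ) ^ 2)) (poissonMeasure r) = c * r := by
  simp only [sqrt_const_mul_natCast_sq hc]
  rw [variance_const_mul, sq_sqrt hc, variance_natCast_poissonMeasure]

lemma not_ae_bddAbove_const_mul_sq_poissonMeasure (hc : 0 < c) (hr : 0 < r) :
    ¬ ∃ C : ℝ, ∀ᵐ n : ℕ ∂poissonMeasure r, c * (n : ℝ) ^ 2 ≤ C := by
  rintro ⟨C, hC⟩
  have htendsto : Filter.Tendsto (fun n : ℕ => c * (n : ℝ) ^ 2) Filter.atTop Filter.atTop :=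
    ((Filter.tendsto_pow_atTop two_ne_zero).comp tendsto_natCast_atTop_atTop).const_mul_atTop hc
  obtain ⟨n, hn⟩ := (htendsto.eventually_gt_atTop C).exists
  exact hn.not_ge ((ae_poissonMeasure_iff hr).1 hC n)

lemma essInf_const_mul_sq_poissonMeasure (hc : 0 ≤ c) (hr : 0 < r) :
    essInf (fun n : ℕ => c * (n : ℝ) ^ 2) (poissonMeasure r) = 0 := by
  have hmono : Monotone fun n : ℕ => c * (n : ℝ) ^ 2 := fun _ _ _ => by dsimp only; gcongr
  simpa using essInf_poissonMeasure_of_monotone hr hmono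

lemma integral_sqrt_sub_sqrt_essInf_sq_poissonMeasure (hc : 0 ≤ c) (hr : 0 < r) :
    ∫ n : ℕ, (√(c * (n : ℝ) ^ 2) -
        √(essInf (fun n : ℕ => c * (n : ℝ) ^ 2) (poissonMeasure r))) ^ 2 ∂poissonMeasure r =
      c * (r * (r + 1)) := by
  simp only [essInf_const_mul_sq_poissonMeasure hc hr, sqrt_const_mul_natCast_sq hc, sqrt_zero,
    sub_zero, mul_pow, sq_sqrt hc]
  rw [integral_const_mul, integral_natCast_sq_poissonMeasure]

end ScaledSquare

theorem inf_E_over_unbounded_class_general (V : ℝ) (hV : 0 < V) :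
    {e : ℝ |
      ∃ (Ω : Type) (_ : MeasurableSpace Ω) (μ : Measure Ω) (_ : IsProbabilityMeasure μ)
        (X : Ω → ℝ), Measurable X ∧ (∀ᵐ ω ∂μ, 0 ≤ X ω) ∧ Integrable X μ ∧
        variance (fun ω => Real.sqrt (X ω)) μ = V ∧
        (¬ ∃ C : ℝ, ∀ᵐ ω ∂μ, X ω ≤ C) ∧
        e = ∫ ω, (Real.sqrt (X ω) - Real.sqrt (essInf X μ)) ^ 2 ∂μ} = Set.Ioi V := by
  ext e
  constructor
  · rintro ⟨Ω, _, μ, _, X, -, hnonneg, hint, hvar, hunbdd, rfl⟩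
    exact hvar ▸ variance_sqrt_lt_integral_sub_sqrt_essInf_sq hint hnonneg hunbdd
  · intro (he : V < e)
    have hpos : 0 < (e - V) / V := div_pos (sub_pos.2 he) hV
    obtain ⟨r, hr, rfl⟩ : ∃ r : ℝ≥0, 0 < r ∧ (1 + r) * V = e :=
      ⟨((e - V) / V).toNNReal, toNNReal_pos.2 hpos, by
        rw [coe_toNNReal _ hpos.le]
        field_simp
        ring⟩
    have hc : 0 < V / r := by positivity
    refine ⟨ℕ, inferInstance, poissonMeasure r, inferInstance, fun n => V / r * (n : ℝ) ^ 2,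
      .of_discrete, ae_of_all _ fun n => by positivity,
      (integrable_natCast_sq_poissonMeasure r).const_mul _, ?_,
      not_ae_bddAbove_const_mul_sq_poissonMeasure hc hr, ?_⟩
    · rw [variance_sqrt_const_mul_sq_poissonMeasure hc.le]
      field_simp
    · rw [integral_sqrt_sub_sqrt_essInf_sq_poissonMeasure hc.le hr]
      field_simp
      ring

/-- For every `V > 0` and `ε ∈ (0,1)` there is a nonnegative integrable random
variable `X` with `Var √X = V`, `essSup X = ∞` (essentially unbounded), and
`E (√X - √(essInf X))² = (1+ε) V`. Consequently the infimum of
`E (√X - √(essInf X))²` over this class equals `V`. -/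
theorem inf_E_over_unbounded_class (V : ℝ) (hV : 0 < V) :
    (∀ ε : ℝ, ε ∈ Set.Ioo (0 : ℝ) 1 →
      ∃ (Ω : Type) (_ : MeasurableSpace Ω) (μ : Measure Ω) (_ : IsProbabilityMeasure μ)
        (X : Ω → ℝ), Measurable X ∧ (∀ᵐ ω ∂μ, 0 ≤ X ω) ∧ Integrable X μ ∧
        variance (fun ω => Real.sqrt (X ω)) μ = V ∧
        (¬ ∃ C : ℝ, ∀ᵐ ω ∂μ, X ω ≤ C) ∧
        (∫ ω, (Real.sqrt (X ω) - Real.sqrt (essInf X μ)) ^ 2 ∂μ) = (1 + ε) * V) ∧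
    sInf {e : ℝ |
      ∃ (Ω : Type) (_ : MeasurableSpace Ω) (μ : Measure Ω) (_ : IsProbabilityMeasure μ)
        (X : Ω → ℝ), Measurable X ∧ (∀ᵐ ω ∂μ, 0 ≤ X ω) ∧ Integrable X μ ∧
        variance (fun ω => Real.sqrt (X ω)) μ = V ∧
        (¬ ∃ C : ℝ, ∀ᵐ ω ∂μ, X ω ≤ C) ∧
        e = ∫ ω, (Real.sqrt (X ω) - Real.sqrt (essInf X μ)) ^ 2 ∂μ} = V := by
  refine ⟨fun ε hε => ?_, by rw [inf_E_over_unbounded_class_general V hV, csInf_Ioi]⟩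
  obtain ⟨Ω, mΩ, μ, hμ, X, hmeas, hnonneg, hint, hvar, hunbdd, heq⟩ :=
    (inf_E_over_unbounded_class_general V hV).ge
      (show V < (1 + ε) * V from lt_mul_of_one_lt_left hV (lt_add_of_pos_right 1 hε.1))
  exact ⟨Ω, mΩ, μ, hμ, X, hmeas, hnonneg, hint, hvar, hunbdd, heq.symm⟩
end
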